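/- arXiv:1605.05094 — 2 statements merged into one kernel-verified Lean document; each statement's English description precedes it below -/
import Mathlib

section
/- If the sublinear operators E_μ and E_υ are both continuous from above on 𝒳, then Problem 2.1 admits an optimal solution: there exists X_α ∈ 𝒳_α with E_ῡ[X_α] = sup_{X ∈ 𝒳_α} E_ῡ[X]. -/
open MeasureTheory Filter Topology
open scoped ENNReal

/-- `X` belongs to the space `𝒳` of bounded measurable real-valued functions on `Ω`. -/
def MemX {Ω : Type*} [MeasurableSpace Ω] (X : Ω → ℝ) : Prop :=
  Measurable X ∧ ∃ M : ℝ, ∀ ω, |X ω| ≤ M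

/-- A sublinear operator on `𝒳`: monotone, constant preserving, subadditive and
positively homogeneous. -/
def IsSublinearOp {Ω : Type*} [MeasurableSpace Ω] (ρ : (Ω → ℝ) → ℝ) : Prop :=
  (∀ X Y : Ω → ℝ, MemX X → MemX Y → (∀ ω, Y ω ≤ X ω) → ρ Y ≤ ρ X) ∧
  (∀ c : ℝ, ρ (fun _ => c) = c) ∧
  (∀ X Y : Ω → ℝ, MemX X → MemX Y → ρ (X + Y) ≤ ρ X + ρ Y) ∧
  (∀ c : ℝ, 0 ≤ c → ∀ X : Ω → ℝ, MemX X → ρ (c • X) = c * ρ X)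

/-- A linear functional on `𝒳`. -/
def IsLinearOp {Ω : Type*} [MeasurableSpace Ω] (L : (Ω → ℝ) → ℝ) : Prop :=
  (∀ X Y : Ω → ℝ, MemX X → MemX Y → L (X + Y) = L X + L Y) ∧
  (∀ (c : ℝ) (X : Ω → ℝ), MemX X → L (c • X) = c * L X)

/-- `L` is dominated by `ρ` on `𝒳`. -/
def Dominated {Ω : Type*} [MeasurableSpace Ω] (L ρ : (Ω → ℝ) → ℝ) : Prop :=
  ∀ X : Ω → ℝ, MemX X → L X ≤ ρ X

/-- The conjugate operator `E_ῡ[X] := -E_υ[-X]`. -/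
def conjOp {Ω : Type*} (ρ : (Ω → ℝ) → ℝ) : (Ω → ℝ) → ℝ := fun X => -ρ (-X)

/-- The set `𝒳_α` of test functions at significance level `α`. -/
def testSet {Ω : Type*} [MeasurableSpace Ω] (Emu : (Ω → ℝ) → ℝ) (α : ℝ) : Set (Ω → ℝ) :=
  {X | MemX X ∧ (∀ ω, 0 ≤ X ω ∧ X ω ≤ 1) ∧ Emu X ≤ α}

/-- A sublinear operator `ρ` on `𝒳` is continuous from above: `ρ(X_n) ↓ 0` whenever
`X_n ∈ 𝒳` and `X_n ↓ 0` pointwise. -/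
def ContFromAbove {Ω : Type*} [MeasurableSpace Ω] (ρ : (Ω → ℝ) → ℝ) : Prop :=
  ∀ X : ℕ → Ω → ℝ, (∀ n, MemX (X n)) → (∀ ω, Antitone fun n => X n ω) →
    (∀ ω, Tendsto (fun n => X n ω) atTop (𝓝 0)) →
    Tendsto (fun n => ρ (X n)) atTop (𝓝 0)


lemma MemX.add' {Ω : Type*} [MeasurableSpace Ω] {X Y : Ω → ℝ} (hX : MemX X) (hY : MemX Y) :
    MemX (X + Y) := by
  obtain ⟨hX, M, hM⟩ := hX
  obtain ⟨hY, N, hN⟩ := hY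
  exact ⟨hX.add hY, M + N, fun ω => (abs_add_le _ _).trans (add_le_add (hM ω) (hN ω))⟩

lemma MemX.smul' {Ω : Type*} [MeasurableSpace Ω] {X : Ω → ℝ} (c : ℝ) (hX : MemX X) :
    MemX (c • X) := by
  obtain ⟨hX, M, hM⟩ := hX
  refine ⟨hX.const_smul c, |c| * M, fun ω => ?_⟩
  simp only [Pi.smul_apply, smul_eq_mul, abs_mul]
  exact mul_le_mul_of_nonneg_left (hM ω) (abs_nonneg _)

lemma MemX.neg' {Ω : Type*} [MeasurableSpace Ω] {X : Ω → ℝ} (hX : MemX X) :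
    MemX (-X) := by
  simpa using hX.smul' (-1)

lemma MemX.sub' {Ω : Type*} [MeasurableSpace Ω] {X Y : Ω → ℝ} (hX : MemX X) (hY : MemX Y) :
    MemX (X - Y) := by
  rw [sub_eq_add_neg]; exact hX.add' hY.neg'

lemma MemX.const' {Ω : Type*} [MeasurableSpace Ω] (c : ℝ) : MemX (fun _ : Ω => c) :=
  ⟨measurable_const, |c|, fun _ => le_rfl⟩

/-- indicator function -/
noncomputable def indf {Ω : Type*} (A : Set Ω) : Ω → ℝ := A.indicator (fun _ => (1 : ℝ))

lemma indf_nonneg {Ω : Type*} (A : Set Ω) (ω : Ω) : 0 ≤ indf A ω :=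
  Set.indicator_nonneg (fun _ _ => zero_le_one) ω

lemma indf_le_one {Ω : Type*} (A : Set Ω) (ω : Ω) : indf A ω ≤ 1 := by
  unfold indf Set.indicator; split_ifs <;> norm_num

lemma memX_indf {Ω : Type*} [MeasurableSpace Ω] {A : Set Ω} (hA : MeasurableSet A) :
    MemX (indf A) :=
  ⟨measurable_const.indicator hA, 1, fun ω => by
    rw [abs_of_nonneg (indf_nonneg A ω)]; exact indf_le_one A ω⟩

/-- the space of bounded measurable functions as a submodule -/
def bmf (Ω : Type*) [MeasurableSpace Ω] : Submodule ℝ (Ω → ℝ) where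
  carrier := {X | MemX X}
  add_mem' := fun hX hY => MemX.add' hX hY
  zero_mem' := MemX.const' 0
  smul_mem' := fun c _ hX => MemX.smul' c hX

lemma IsSublinearOp.zero' {Ω : Type*} [MeasurableSpace Ω] {ρ : (Ω → ℝ) → ℝ}
    (h : IsSublinearOp ρ) : ρ 0 = 0 := h.2.1 0

lemma exists_dom_linear {Ω : Type*} [MeasurableSpace Ω] {ρ : (Ω → ℝ) → ℝ}
    (h : IsSublinearOp ρ) (x : bmf Ω) :
    ∃ g : bmf Ω →ₗ[ℝ] ℝ, g x = ρ x ∧ ∀ y, g y ≤ ρ y := by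
  have H : ∀ c : ℝ, c • x = 0 → (RingHom.id ℝ) c • ρ x = 0 := by
    intro c hc
    rcases smul_eq_zero.1 hc with hc | hc
    · simp [hc]
    · simp [hc, h.zero']
  obtain ⟨g, hg1, hg2⟩ := exists_extension_of_le_sublinear
    (LinearPMap.mkSpanSingleton' x (ρ x) H) (fun y : bmf Ω => ρ y)
    (fun c hc y => h.2.2.2 c hc.le y y.2) (fun y z => h.2.2.1 y z y.2 z.2) (by
      rintro ⟨y, hy⟩
      obtain ⟨c, rfl⟩ := Submodule.mem_span_singleton.1 hy
      rw [LinearPMap.mkSpanSingleton'_apply]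
      simp only [RingHom.id_apply, smul_eq_mul]
      rcases le_total 0 c with hc | hc
      · exact (h.2.2.2 c hc x x.2).ge
      · have h1 := h.2.2.2 (-c) (neg_nonneg.2 hc) x x.2
        have h2 := h.2.2.1 (c • (x : Ω → ℝ)) ((-c) • (x : Ω → ℝ)) (MemX.smul' c x.2)
          (MemX.smul' (-c) x.2)
        rw [← add_smul, add_neg_cancel, zero_smul, h.zero', h1] at h2
        show c * ρ x ≤ ρ (c • (x : Ω → ℝ))
        linarith)
  refine ⟨g, ?_, hg2⟩
  have := hg1 ⟨x, Submodule.mem_span_singleton_self x⟩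
  exact this.trans (LinearPMap.mkSpanSingleton'_apply_self x (ρ x) H _)

lemma exists_dom_measure {Ω : Type*} [MeasurableSpace Ω] {ρ : (Ω → ℝ) → ℝ}
    (h : IsSublinearOp ρ) (hc : ContFromAbove ρ) {A : Set Ω} (hA : MeasurableSet A) :
    ∃ μ : Measure Ω, IsFiniteMeasure μ ∧
      (∀ B, MeasurableSet B → μ B ≤ ENNReal.ofReal (ρ (indf B))) ∧
      μ A = ENNReal.ofReal (ρ (indf A)) := by
  obtain ⟨g, hgA, hg⟩ := exists_dom_linear h ⟨indf A, memX_indf hA⟩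
  have hpos : ∀ y : bmf Ω, (∀ ω, 0 ≤ (y : Ω → ℝ) ω) → 0 ≤ g y := by
    intro y hy
    have h1 := hg (-y)
    have h2 := h.1 0 (-(y : Ω → ℝ)) (MemX.const' 0) (MemX.neg' y.2) (fun ω => by simpa using hy ω)
    rw [h.zero'] at h2
    rw [map_neg] at h1
    have h3 : ((-y : bmf Ω) : Ω → ℝ) = -(y : Ω → ℝ) := rfl
    rw [h3] at h1
    linarith
  let m : ∀ s : Set Ω, MeasurableSet s → ℝ≥0∞ := fun s hs =>
    ENNReal.ofReal (g ⟨indf s, memX_indf hs⟩)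
  have m0 : m ∅ MeasurableSet.empty = 0 := by
    have : (⟨indf (∅ : Set Ω), memX_indf MeasurableSet.empty⟩ : bmf Ω) = 0 := by
      ext ω; simp [indf]
    simp only [m, this, map_zero, ENNReal.ofReal_zero]
  have mU : ∀ ⦃f : ℕ → Set Ω⦄ (h : ∀ i, MeasurableSet (f i)),
        Pairwise (Function.onFun Disjoint f) →
          m (⋃ i, f i) (MeasurableSet.iUnion h) = ∑' i, m (f i) (h i) := by
    intro f hf hd
    let F : ℕ → bmf Ω := fun i => ⟨indf (f i), memX_indf (hf i)⟩
    let U : bmf Ω := ⟨indf (⋃ i, f i), memX_indf (MeasurableSet.iUnion hf)⟩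
    have hF0 : ∀ i, 0 ≤ g (F i) := fun i => hpos _ (indf_nonneg _)
    have key : ∀ n, ((U - ∑ i ∈ Finset.range n, F i : bmf Ω) : Ω → ℝ)
        = indf (⋃ i, ⋃ (_ : n ≤ i), f i) := by
      intro n
      ext ω
      have e1 : ((U - ∑ i ∈ Finset.range n, F i : bmf Ω) : Ω → ℝ) ω
          = indf (⋃ i, f i) ω - ∑ i ∈ Finset.range n, indf (f i) ω := by
        simp [U, F]
      rw [e1]
      by_cases hω : ∃ i, ω ∈ f i
      · obtain ⟨i, hi⟩ := hω
        have hne : ∀ j, ω ∈ f j ↔ j = i := by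
          intro j
          constructor
          · intro hj
            by_contra hji
            exact Set.disjoint_left.1 (hd hji) hj hi
          · rintro rfl; exact hi
        simp [indf, Set.indicator, hne]
        split_ifs <;> first | omega | simp
      · push Not at hω
        simp [indf, Set.indicator, hω]
    have lim : Tendsto (fun n => ρ ((U - ∑ i ∈ Finset.range n, F i : bmf Ω) : Ω → ℝ)) atTop
        (𝓝 0) := by
      simp_rw [key]
      apply hc
      · intro n
        exact memX_indf (MeasurableSet.iUnion fun i => MeasurableSet.iUnion fun _ => hf i)
      · intro ω a b hab
        apply Set.indicator_le_indicator_of_subset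
        · intro x hx
          simp only [Set.mem_iUnion] at hx ⊢
          obtain ⟨i, hi, hx⟩ := hx
          exact ⟨i, hab.trans hi, hx⟩
        · intro _; exact zero_le_one
      · intro ω
        apply tendsto_const_nhds.congr'
        by_cases hω : ∃ i, ω ∈ f i
        · obtain ⟨i, hi⟩ := hω
          filter_upwards [eventually_gt_atTop i] with n hn
          symm
          apply Set.indicator_of_notMem
          simp only [Set.mem_iUnion, not_exists]
          intro j hj hωj
          exact Set.disjoint_left.1 (hd (show i ≠ j by omega)) hi hωj
        · push Not at hω
          filter_upwards with n
          simp [indf, hω]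
    have lim2 : Tendsto (fun n => g (U - ∑ i ∈ Finset.range n, F i)) atTop (𝓝 0) := by
      refine squeeze_zero (fun n => hpos _ (fun ω => ?_)) (fun n => hg _) lim
      rw [key]; exact indf_nonneg _ _
    have hs : HasSum (fun i => g (F i)) (g U) := by
      rw [hasSum_iff_tendsto_nat_of_nonneg hF0]
      have := (tendsto_const_nhds (x := g U)).sub lim2
      simpa using this
    show ENNReal.ofReal (g U) = ∑' i, ENNReal.ofReal (g (F i))
    rw [← hs.tsum_eq, ENNReal.ofReal_tsum_of_nonneg hF0 hs.summable]
  refine ⟨Measure.ofMeasurable m m0 mU, ⟨?_⟩, ?_, ?_⟩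
  · rw [Measure.ofMeasurable_apply _ MeasurableSet.univ]
    exact ENNReal.ofReal_lt_top
  · intro B hB
    rw [Measure.ofMeasurable_apply _ hB]
    exact ENNReal.ofReal_le_ofReal (hg _)
  · rw [Measure.ofMeasurable_apply _ hA]
    simp only [m, hgA]

lemma exists_ctrl_eps {Ω : Type*} [MeasurableSpace Ω] {ρ : (Ω → ℝ) → ℝ}
    (h : IsSublinearOp ρ) (hc : ContFromAbove ρ) {ε : ℝ} (hε : 0 < ε) :
    ∃ ν : FiniteMeasure Ω, ∀ A, MeasurableSet A → (ν : Measure Ω) A = 0 → ρ (indf A) < ε := by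
  by_contra hcon
  have H : ∀ (ν : FiniteMeasure Ω) (n : ℕ), ∃ (A : Set Ω) (μ : FiniteMeasure Ω),
      MeasurableSet A ∧ (ν : Measure Ω) A ≤ (2⁻¹ : ℝ≥0∞) ^ n ∧
      (∀ B, MeasurableSet B → (μ : Measure Ω) B ≤ ENNReal.ofReal (ρ (indf B))) ∧
      ENNReal.ofReal ε ≤ (μ : Measure Ω) A := by
    intro ν n
    push Not at hcon
    obtain ⟨A, hA, hA0, hAε⟩ := hcon ν
    obtain ⟨μ, hμ, h1, h2⟩ := exists_dom_measure h hc hA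
    refine ⟨A, ⟨μ, hμ⟩, hA, by rw [hA0]; exact zero_le, h1, ?_⟩
    show _ ≤ μ A
    rw [h2]; exact ENNReal.ofReal_le_ofReal hAε
  choose G M hG hG2 hM hGM using H
  obtain ⟨ν, hν⟩ : ∃ ν : ℕ → FiniteMeasure Ω, ∀ n, ν (n + 1) = ν n + M (ν n) n :=
    ⟨fun n => Nat.rec 0 (fun n ν => ν + M ν n) n, fun n => rfl⟩
  have hmono : Monotone fun n => (ν n).toMeasure := by
    apply monotone_nat_of_le_succ
    intro n
    rw [hν, FiniteMeasure.toMeasure_add]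
    exact Measure.le_add_right le_rfl
  let A : ℕ → Set Ω := fun n => G (ν n) n
  have hA : ∀ n, MeasurableSet (A n) := fun n => hG _ _
  let B := limsup A atTop
  have hB : MeasurableSet B := MeasurableSet.measurableSet_limsup hA
  have hνB : ∀ i, (ν i : Measure Ω) B = 0 := by
    intro i
    have : B = limsup (fun n => A (n + i)) atTop := (limsup_nat_add A i).symm
    rw [this]
    apply measure_limsup_atTop_eq_zero
    have hle : ∑' n, (ν i : Measure Ω) (A (n + i)) ≤ ∑' n : ℕ, (2⁻¹ : ℝ≥0∞) ^ n := by
      apply ENNReal.tsum_le_tsum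
      intro n
      calc (ν i : Measure Ω) (A (n + i)) ≤ (ν (n + i) : Measure Ω) (A (n + i)) :=
            hmono (Nat.le_add_left i n) _
        _ ≤ (2⁻¹ : ℝ≥0∞) ^ (n + i) := hG2 _ _
        _ ≤ (2⁻¹ : ℝ≥0∞) ^ n := pow_le_pow_of_le_one zero_le (by simp) (Nat.le_add_right n i)
    refine ne_top_of_le_ne_top ?_ hle
    rw [ENNReal.tsum_geometric]
    simp
  have hMB : ∀ n, (M (ν n) n : Measure Ω) B = 0 := by
    intro n
    have := hνB (n + 1)
    rw [hν, FiniteMeasure.toMeasure_add, Measure.add_apply] at this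
    exact (add_eq_zero.1 this).2
  let D : ℕ → Set Ω := fun n => (⋃ i, ⋃ (_ : n ≤ i), A i) \ B
  have hD : ∀ n, MeasurableSet (D n) := fun n =>
    (MeasurableSet.iUnion fun i => MeasurableSet.iUnion fun _ => hA i).diff hB
  have lim : Tendsto (fun n => ρ (indf (D n))) atTop (𝓝 0) := by
    apply hc
    · intro n; exact memX_indf (hD n)
    · intro ω a b hab
      apply Set.indicator_le_indicator_of_subset
      · rintro x ⟨hx, hxB⟩
        refine ⟨?_, hxB⟩
        simp only [Set.mem_iUnion] at hx ⊢
        obtain ⟨i, hi, hx⟩ := hx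
        exact ⟨i, hab.trans hi, hx⟩
      · intro _; exact zero_le_one
    · intro ω
      apply tendsto_const_nhds.congr'
      by_cases hω : ω ∈ B
      · filter_upwards with n
        symm
        apply Set.indicator_of_notMem
        exact fun hx => hx.2 hω
      · have hω' := hω
        simp only [B, mem_limsup_iff_frequently_mem, not_frequently] at hω'
        obtain ⟨N, hN⟩ := eventually_atTop.1 hω'
        filter_upwards [eventually_ge_atTop N] with n hn
        symm
        apply Set.indicator_of_notMem
        rintro ⟨hx, -⟩
        simp only [Set.mem_iUnion] at hx
        obtain ⟨i, hi, hx⟩ := hx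
        exact hN i (hn.trans hi) hx
  obtain ⟨n, hn⟩ := (lim.eventually (gt_mem_nhds hε)).exists
  have h1 : ENNReal.ofReal ε ≤ ENNReal.ofReal (ρ (indf (D n))) := by
    calc ENNReal.ofReal ε ≤ (M (ν n) n : Measure Ω) (A n) := hGM _ _
      _ ≤ (M (ν n) n : Measure Ω) (D n ∪ B) := by
          apply measure_mono
          intro x hx
          by_cases hxB : x ∈ B
          · exact Or.inr hxB
          · refine Or.inl ⟨?_, hxB⟩
            simp only [Set.mem_iUnion]
            exact ⟨n, le_rfl, hx⟩
      _ ≤ (M (ν n) n : Measure Ω) (D n) + (M (ν n) n : Measure Ω) B := measure_union_le _ _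
      _ = (M (ν n) n : Measure Ω) (D n) := by rw [hMB, add_zero]
      _ ≤ _ := hM _ _ _ (hD n)
  have h2 : ENNReal.ofReal (ρ (indf (D n))) < ENNReal.ofReal ε :=
    (ENNReal.ofReal_lt_ofReal_iff hε).2 hn
  exact absurd h1 (not_le.2 h2)

lemma exists_ctrl {Ω : Type*} [MeasurableSpace Ω] {ρ : (Ω → ℝ) → ℝ}
    (h : IsSublinearOp ρ) (hc : ContFromAbove ρ) :
    ∃ ν : Measure Ω, IsFiniteMeasure ν ∧ ∀ A, MeasurableSet A → ν A = 0 → ρ (indf A) ≤ 0 := by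
  have H : ∀ k : ℕ, ∃ ν : FiniteMeasure Ω, ∀ A, MeasurableSet A → (ν : Measure Ω) A = 0 →
      ρ (indf A) < 1 / ((k : ℝ) + 1) := fun k => exists_ctrl_eps h hc (by positivity)
  choose ν hν using H
  obtain ⟨μ, hμ, hac, -⟩ := exists_isFiniteMeasure_absolutelyContinuous
    (Measure.sum fun k => (ν k : Measure Ω))
  refine ⟨μ, hμ, fun A hA hA0 => ?_⟩
  have h0 := hac hA0
  rw [Measure.sum_apply _ hA, ENNReal.tsum_eq_zero] at h0
  exact ge_of_tendsto tendsto_one_div_add_atTop_nhds_zero_nat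
    (Eventually.of_forall fun k => (hν k A hA (h0 k)).le)

lemma hilbert_inter {H : Type*} [NormedAddCommGroup H] [InnerProductSpace ℝ H] [CompleteSpace H]
    (C : ℕ → Set H) (hanti : Antitone C) (hconv : ∀ n, Convex ℝ (C n))
    (hne : ∀ n, (C n).Nonempty) (R : ℝ) (hR : ∀ h ∈ C 0, ‖h‖ ≤ R) :
    ∃ p, ∀ n, p ∈ closure (C n) := by
  have hex : ∀ n, ∃ v ∈ closure (C n), ∀ w ∈ closure (C n), ‖v‖ ^ 2 + ‖w - v‖ ^ 2 ≤ ‖w‖ ^ 2 := by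
    intro n
    obtain ⟨v, hv, hv2⟩ := exists_norm_eq_iInf_of_complete_convex (hne n).closure
      isClosed_closure.isComplete (hconv n).closure 0
    refine ⟨v, hv, fun w hw => ?_⟩
    have := (norm_eq_iInf_iff_real_inner_le_zero (hconv n).closure hv).1 hv2 w hw
    rw [zero_sub, inner_neg_left] at this
    have h2 := norm_add_sq_real v (w - v)
    rw [add_sub_cancel] at h2
    linarith
  choose p hp hmin using hex
  have hmem : ∀ n m, n ≤ m → p m ∈ closure (C n) := fun n m hnm =>
    closure_mono (hanti hnm) (hp m)
  have hbd : ∀ h ∈ closure (C 0), ‖h‖ ≤ R := by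
    intro h hh
    have : closure (C 0) ⊆ Metric.closedBall 0 R :=
      closure_minimal (fun x hx => by simpa using hR x hx) Metric.isClosed_closedBall
    simpa using this hh
  have hmono : Monotone fun n => ‖p n‖ ^ 2 := by
    intro n m hnm
    have := hmin n (p m) (hmem n m hnm)
    have := sq_nonneg ‖p m - p n‖
    show ‖p n‖ ^ 2 ≤ ‖p m‖ ^ 2
    linarith
  have hbdd : BddAbove (Set.range fun n => ‖p n‖ ^ 2) := by
    refine ⟨R ^ 2, ?_⟩
    rintro _ ⟨n, rfl⟩
    exact pow_le_pow_left₀ (norm_nonneg _) (hbd _ (hmem 0 n (Nat.zero_le n))) 2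
  have hlim := tendsto_atTop_ciSup hmono hbdd
  have hcau : CauchySeq p := by
    rw [Metric.cauchySeq_iff']
    intro ε hε
    obtain ⟨N, hN⟩ := Metric.cauchySeq_iff'.1 hlim.cauchySeq (ε ^ 2) (by positivity)
    refine ⟨N, fun n hn => ?_⟩
    have h1 := hN n hn
    have h2 := hmin N (p n) (hmem N n hn)
    rw [Real.dist_eq] at h1
    have h3 := (abs_lt.1 h1).2
    rw [dist_eq_norm]
    exact lt_of_pow_lt_pow_left₀ 2 hε.le (by linarith)
  obtain ⟨q, hq⟩ := cauchySeq_tendsto_of_complete hcau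
  refine ⟨q, fun n => ?_⟩
  exact isClosed_closure.mem_of_tendsto hq
    ((eventually_ge_atTop n).mono fun m hm => hmem n m hm)

lemma komlos_sets {Ω : Type*} [MeasurableSpace Ω] (ν : Measure Ω) [IsFiniteMeasure ν]
    (K : ℕ → Set (Ω → ℝ)) (hanti : Antitone K) (hconv : ∀ n, Convex ℝ (K n))
    (hne : ∀ n, (K n).Nonempty) (hK : ∀ X ∈ K 0, Measurable X ∧ ∀ ω, 0 ≤ X ω ∧ X ω ≤ 1) :
    ∃ (Y : ℕ → Ω → ℝ) (Z : Ω → ℝ), (∀ n, Y n ∈ K n) ∧ Measurable Z ∧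
      (∀ ω, 0 ≤ Z ω ∧ Z ω ≤ 1) ∧ ∀ᵐ ω ∂ν, Tendsto (fun n => Y n ω) atTop (𝓝 (Z ω)) := by
  have hK' : ∀ n, ∀ X ∈ K n, Measurable X ∧ ∀ ω, 0 ≤ X ω ∧ X ω ≤ 1 := fun n X hX =>
    hK X (hanti (Nat.zero_le n) hX)
  let C : ℕ → Set (Lp ℝ 2 ν) := fun n => {f | ∃ X ∈ K n, (f : Ω → ℝ) =ᵐ[ν] X}
  have hCanti : Antitone C := by
    rintro a b hab f ⟨X, hX, hf⟩
    exact ⟨X, hanti hab hX, hf⟩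
  have hCconv : ∀ n, Convex ℝ (C n) := by
    rintro n f ⟨X, hX, hf⟩ f' ⟨X', hX', hf'⟩ a b ha hb hab
    refine ⟨a • X + b • X', hconv n hX hX' ha hb hab, ?_⟩
    filter_upwards [Lp.coeFn_add (a • f) (b • f'), Lp.coeFn_smul a f, Lp.coeFn_smul b f', hf, hf']
      with ω h1 h2 h3 h4 h5
    rw [h1]
    simp only [Pi.add_apply, Pi.smul_apply, h2, h3, h4, h5]
  have hCne : ∀ n, (C n).Nonempty := by
    intro n
    obtain ⟨X, hX⟩ := hne n
    obtain ⟨hm, hb⟩ := hK' n X hX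
    have hL : MemLp X 2 ν := MemLp.of_bound hm.aestronglyMeasurable 1
      (Eventually.of_forall fun ω => by
        rw [Real.norm_eq_abs, abs_of_nonneg (hb ω).1]; exact (hb ω).2)
    exact ⟨hL.toLp X, X, hX, hL.coeFn_toLp⟩
  obtain ⟨p, hp⟩ := hilbert_inter C hCanti hCconv hCne _ (by
    rintro f ⟨X, hX, hf⟩
    apply Lp.norm_le_of_ae_bound (C := 1) zero_le_one
    filter_upwards [hf] with ω h1
    rw [h1, Real.norm_eq_abs, abs_of_nonneg ((hK X hX).2 ω).1]
    exact ((hK X hX).2 ω).2)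
  have hex : ∀ n : ℕ, ∃ f ∈ C n, dist f p ≤ 1 / ((n : ℝ) + 1) := by
    intro n
    obtain ⟨f, hf, hd⟩ := Metric.mem_closure_iff.1 (hp n) (1 / ((n : ℝ) + 1)) (by positivity)
    exact ⟨f, hf, by rw [dist_comm]; exact hd.le⟩
  choose f hf hd using hex
  have hft : Tendsto f atTop (𝓝 p) := by
    rw [tendsto_iff_dist_tendsto_zero]
    exact squeeze_zero (fun _ => dist_nonneg) hd tendsto_one_div_add_atTop_nhds_zero_nat
  obtain ⟨ns, hns, hae⟩ := (tendstoInMeasure_of_tendsto_Lp hft).exists_seq_tendsto_ae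
  choose X hX hfX using hf
  have hpm : AEMeasurable (p : Ω → ℝ) ν := (Lp.aestronglyMeasurable p).aemeasurable
  refine ⟨fun n => X (ns n), fun ω => max 0 (min 1 (hpm.mk _ ω)), fun n => ?_, ?_, ?_, ?_⟩
  · exact hanti (hns.id_le n) (hX (ns n))
  · exact measurable_const.max (measurable_const.min hpm.measurable_mk)
  · intro ω
    exact ⟨le_max_left _ _, max_le zero_le_one (min_le_left _ _)⟩
  · filter_upwards [hae, hpm.ae_eq_mk, ae_all_iff.2 hfX] with ω h1 h2 h3
    simp only [h3, h2] at h1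
    have := (tendsto_const_nhds (x := (0:ℝ))).max ((tendsto_const_nhds (x := (1:ℝ))).min h1)
    refine this.congr fun n => ?_
    have hb := (hK' _ _ (hX (ns n))).2 ω
    rw [min_eq_right hb.2, max_eq_right hb.1]

lemma tendsto_abs_sub {Ω : Type*} [MeasurableSpace Ω] {ρ : (Ω → ℝ) → ℝ}
    (h : IsSublinearOp ρ) (hc : ContFromAbove ρ) {N : Set Ω} (hN : MeasurableSet N)
    (hN0 : ρ (indf N) ≤ 0) (W : ℕ → Ω → ℝ) (hW : ∀ n, Measurable (W n))
    (hb : ∀ n ω, 0 ≤ W n ω ∧ W n ω ≤ 1)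
    (hlim : ∀ ω, ω ∉ N → Tendsto (fun n => W n ω) atTop (𝓝 0)) :
    Tendsto (fun n => ρ (W n)) atTop (𝓝 0) := by
  let V : ℕ → Ω → ℝ := fun n ω => Nᶜ.indicator (W n) ω
  have hV : ∀ n, Measurable (V n) := fun n => (hW n).indicator hN.compl
  have hVb : ∀ n ω, 0 ≤ V n ω ∧ V n ω ≤ 1 := by
    intro n ω
    simp only [V, Set.indicator]
    split_ifs
    · exact hb n ω
    · simp
  have hVlim : ∀ ω, Tendsto (fun n => V n ω) atTop (𝓝 0) := by
    intro ω
    by_cases hω : ω ∈ N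
    · simp [V, hω]
    · simpa [V, hω] using hlim ω hω
  let Z : ℕ → Ω → ℝ := fun n ω => ⨆ k, V (n + k) ω
  have hbdd : ∀ n ω, BddAbove (Set.range fun k => V (n + k) ω) := fun n ω =>
    ⟨1, by rintro _ ⟨k, rfl⟩; exact (hVb _ _).2⟩
  have hVZ : ∀ n m ω, n ≤ m → V m ω ≤ Z n ω := by
    intro n m ω hnm
    obtain ⟨k, rfl⟩ := Nat.exists_eq_add_of_le hnm
    exact le_ciSup (hbdd n ω) k
  have hZ0 : ∀ n ω, 0 ≤ Z n ω := fun n ω => (hVb n ω).1.trans (hVZ n n ω le_rfl)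
  have hZ1 : ∀ n ω, Z n ω ≤ 1 := fun n ω => ciSup_le fun k => (hVb _ _).2
  have hZm : ∀ n, MemX (Z n) := fun n =>
    ⟨Measurable.iSup fun k => hV (n + k), 1, fun ω => by
      rw [abs_of_nonneg (hZ0 n ω)]; exact hZ1 n ω⟩
  have hZlim : Tendsto (fun n => ρ (Z n)) atTop (𝓝 0) := by
    apply hc Z hZm
    · intro ω a b hab
      exact ciSup_le fun k => hVZ a (b + k) ω (by omega)
    · intro ω
      rw [Metric.tendsto_atTop]
      intro ε hε
      obtain ⟨M, hM⟩ := Metric.tendsto_atTop.1 (hVlim ω) (ε / 2) (by positivity)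
      refine ⟨M, fun n hn => ?_⟩
      rw [Real.dist_eq, sub_zero, abs_of_nonneg (hZ0 n ω)]
      have : Z n ω ≤ ε / 2 := ciSup_le fun k => by
        have := hM (n + k) (by omega)
        rw [Real.dist_eq, sub_zero] at this
        exact (le_abs_self _).trans this.le
      linarith
  have hWm : ∀ n, MemX (W n) := fun n => ⟨hW n, 1, fun ω => by
      rw [abs_of_nonneg (hb n ω).1]; exact (hb n ω).2⟩
  refine squeeze_zero (fun n => ?_) (fun n => ?_) hZlim
  · have := h.1 (W n) 0 (hWm n) (MemX.const' 0) (fun ω => (hb n ω).1)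
    rwa [h.zero'] at this
  · have h1 := h.1 (Z n + indf N) (W n) ((hZm n).add' (memX_indf hN)) (hWm n) (fun ω => by
      by_cases hω : ω ∈ N
      · have e : indf N ω = 1 := by simp [indf, hω]
        simp only [Pi.add_apply, e]
        linarith [hZ0 n ω, (hb n ω).2]
      · have e : V n ω = W n ω := by simp [V, hω]
        simp only [Pi.add_apply]
        linarith [hVZ n n ω le_rfl, indf_nonneg N ω])
    have h2 := h.2.2.1 (Z n) (indf N) (hZm n) (memX_indf hN)
    linarith

/-- If `E_μ` and `E_υ` are both continuous from above on `𝒳`, then Problem 2.1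
admits an optimal solution. -/
theorem exists_optimal_solution {Ω : Type*} [MeasurableSpace Ω]
    (Emu Eups : (Ω → ℝ) → ℝ)
    (hEmu : IsSublinearOp Emu) (hEups : IsSublinearOp Eups)
    (α : ℝ) (hα0 : 0 < α) (hα1 : α < 1)
    (hcontmu : ContFromAbove Emu) (hcontups : ContFromAbove Eups) :
    ∃ Xa ∈ testSet Emu α,
      conjOp Eups Xa = sSup (conjOp Eups '' testSet Emu α) := by
 
  classical
  set S := sSup (conjOp Eups '' testSet Emu α) with hS
  have hne : (testSet Emu α).Nonempty :=
    ⟨fun _ => 0, MemX.const' 0, fun _ => ⟨le_rfl, zero_le_one⟩, by rw [hEmu.2.1]; exact hα0.le⟩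
  have hbdd : BddAbove (conjOp Eups '' testSet Emu α) := by
    refine ⟨1, ?_⟩
    rintro _ ⟨X, ⟨hX, hb, -⟩, rfl⟩
    have h1 := hEups.1 (-X) (fun _ => -1) hX.neg' (MemX.const' (-1)) (fun ω => by
      simpa using (hb ω).2)
    rw [hEups.2.1] at h1
    simp only [conjOp]
    linarith
  have hcomb : ∀ (ρ : (Ω → ℝ) → ℝ), IsSublinearOp ρ → ∀ X Y, MemX X → MemX Y → ∀ a b : ℝ,
      0 ≤ a → 0 ≤ b → ρ (a • X + b • Y) ≤ a * ρ X + b * ρ Y := by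
    intro ρ h X Y hX hY a b ha hb
    have := h.2.2.1 (a • X) (b • Y) (hX.smul' a) (hY.smul' b)
    rwa [h.2.2.2 a ha X hX, h.2.2.2 b hb Y hY] at this
  let K : ℕ → Set (Ω → ℝ) := fun n =>
    {X | X ∈ testSet Emu α ∧ S - 1 / ((n : ℝ) + 1) ≤ conjOp Eups X}
  have hKanti : Antitone K := by
    rintro a b hab X ⟨hX, h2⟩
    refine ⟨hX, le_trans ?_ h2⟩
    have := Nat.one_div_le_one_div (α := ℝ) hab
    linarith
  have hKconv : ∀ n, Convex ℝ (K n) := by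
    rintro n X ⟨⟨hX, hXb, hXα⟩, hX2⟩ Y ⟨⟨hY, hYb, hYα⟩, hY2⟩ a b ha hb hab
    refine ⟨⟨(hX.smul' a).add' (hY.smul' b), fun ω => ?_, ?_⟩, ?_⟩
    · simp only [Pi.add_apply, Pi.smul_apply, smul_eq_mul]
      have := hXb ω
      have := hYb ω
      constructor
      · nlinarith
      · nlinarith
    · refine (hcomb Emu hEmu X Y hX hY a b ha hb).trans ?_
      have e : α = a * α + b * α := by rw [← add_mul, hab, one_mul]
      rw [e]
      exact add_le_add (mul_le_mul_of_nonneg_left hXα ha) (mul_le_mul_of_nonneg_left hYα hb)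
    · have h1 := hcomb Eups hEups (-X) (-Y) hX.neg' hY.neg' a b ha hb
      have e : -(a • X + b • Y) = a • (-X) + b • (-Y) := by
        rw [smul_neg, smul_neg, neg_add]
      simp only [conjOp] at hX2 hY2 ⊢
      rw [e]
      have h3 := mul_le_mul_of_nonneg_left hX2 ha
      have h4 := mul_le_mul_of_nonneg_left hY2 hb
      have e2 : S - 1 / ((n : ℝ) + 1)
          = a * (S - 1 / ((n : ℝ) + 1)) + b * (S - 1 / ((n : ℝ) + 1)) := by
        rw [← add_mul, hab, one_mul]
      linarith
  have hKne : ∀ n, (K n).Nonempty := by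
    intro n
    have hpos : (0:ℝ) < 1 / ((n : ℝ) + 1) := by positivity
    obtain ⟨_, ⟨X, hX, rfl⟩, hlt⟩ := exists_lt_of_lt_csSup (hne.image (conjOp Eups))
      (show S - 1 / ((n : ℝ) + 1) < sSup (conjOp Eups '' testSet Emu α) by linarith)
    exact ⟨X, hX, hlt.le⟩
  obtain ⟨ν1, hν1, hn1⟩ := exists_ctrl hEmu hcontmu
  obtain ⟨ν2, hν2, hn2⟩ := exists_ctrl hEups hcontups
  obtain ⟨Y, Z, hY, hZm, hZb, hae⟩ := komlos_sets (ν1 + ν2) K hKanti hKconv hKne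
    (fun X hX => ⟨hX.1.1.1, hX.1.2.1⟩)
  obtain ⟨N, hsub, hNm, hN0⟩ := exists_measurable_superset_of_null (ae_iff.1 hae)
  rw [Measure.add_apply, add_eq_zero] at hN0
  have hlim : ∀ ω, ω ∉ N → Tendsto (fun n => |Y n ω - Z ω|) atTop (𝓝 0) := by
    intro ω hω
    have h1 : Tendsto (fun n => Y n ω) atTop (𝓝 (Z ω)) := by
      by_contra hcon
      exact hω (hsub hcon)
    have h2 := (h1.sub_const (Z ω)).abs
    simpa using h2
  have hYb : ∀ n ω, 0 ≤ Y n ω ∧ Y n ω ≤ 1 := fun n => (hY n).1.2.1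
  have hYm : ∀ n, MemX (Y n) := fun n => (hY n).1.1
  have hZX : MemX Z := ⟨hZm, 1, fun ω => by rw [abs_of_nonneg (hZb ω).1]; exact (hZb ω).2⟩
  let W : ℕ → Ω → ℝ := fun n ω => |Y n ω - Z ω|
  have hWm : ∀ n, Measurable (W n) := fun n => ((hYm n).1.sub hZm).norm
  have hWb : ∀ n ω, 0 ≤ W n ω ∧ W n ω ≤ 1 := by
    intro n ω
    refine ⟨abs_nonneg _, abs_le.2 ?_⟩
    have := hYb n ω
    have := hZb ω
    constructor <;> linarith
  have hWX : ∀ n, MemX (W n) := fun n =>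
    ⟨hWm n, 1, fun ω => by rw [abs_of_nonneg (hWb n ω).1]; exact (hWb n ω).2⟩
  have l1 := tendsto_abs_sub hEmu hcontmu hNm (hn1 N hNm hN0.1) W hWm hWb hlim
  have l2 := tendsto_abs_sub hEups hcontups hNm (hn2 N hNm hN0.2) W hWm hWb hlim
  have hZt : Z ∈ testSet Emu α := by
    refine ⟨hZX, hZb, ?_⟩
    have l3 := l1.const_add α
    rw [add_zero] at l3
    refine ge_of_tendsto l3 (Eventually.of_forall fun n => ?_)
    have h1 := hEmu.1 (Y n + W n) Z ((hYm n).add' (hWX n)) hZX (fun ω => by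
      have := neg_abs_le (Y n ω - Z ω)
      simp only [Pi.add_apply, W]
      linarith)
    have h2 := hEmu.2.2.1 (Y n) (W n) (hYm n) (hWX n)
    have h3 := (hY n).1.2.2
    linarith
  refine ⟨Z, hZt, le_antisymm (le_csSup hbdd ⟨Z, hZt, rfl⟩) ?_⟩
  have l4 := ((tendsto_const_nhds (x := S)).sub
    (tendsto_one_div_add_atTop_nhds_zero_nat (𝕜 := ℝ))).sub l2
  rw [sub_zero, sub_zero] at l4
  refine le_of_tendsto l4 (Eventually.of_forall fun n => ?_)
  have h1 := hEups.1 (-Y n + W n) (-Z) ((hYm n).neg'.add' (hWX n)) hZX.neg' (fun ω => by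
    have := le_abs_self (Y n ω - Z ω)
    simp only [Pi.add_apply, Pi.neg_apply, W]
    linarith)
  have h2 := hEups.2.2.1 (-Y n) (W n) (hYm n).neg' (hWX n)
  have h3 := (hY n).2
  simp only [conjOp] at h3 ⊢
  linarith
end

section
/- X̄_α ∈ 𝒳 is an optimal solution of problem (3.1), i.e. X̄_α ∈ 𝒳̄_α and E_υ[X̄_α] = inf_{X̄ ∈ 𝒳̄_α} E_υ[X̄], if and only if X̄_α ∈ 𝒳̄_α and there exist nonnegative real numbers λ̄₁, λ̄₂, λ̄₃ with λ̄₁·g₁(X̄_α) = 0, λ̄₂·g₂(X̄_α) = 0, λ̄₃·g₃(X̄_α) = 0, and 0 ∈ ∂E_υ(X̄_α) + λ̄₁·∂g₁(X̄_α) + λ̄₂·∂g₂(X̄_α) + λ̄₃·∂g₃(X̄_α), i.e. there exist x₀* ∈ ∂E_υ(X̄_α), x₁* ∈ ∂g₁(X̄_α), x₂* ∈ ∂g₂(X̄_α), x₃* ∈ ∂g₃(X̄_α) with x₀* + λ̄₁x₁* + λ̄₂x₂* + λ̄₃x₃* = 0. -/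
open MeasureTheory Filter Topology
open scoped ENNReal

/-- `Xs` is a subgradient at `X₀` of `f : 𝒳 → ℝ`: a continuous (w.r.t. the supremum
norm) linear functional on `𝒳` with `⟨X - X₀, Xs⟩ ≤ f(X) - f(X₀)` for all `X ∈ 𝒳`. -/
def IsSubgradientAt {Ω : Type*} [MeasurableSpace Ω]
    (f : (Ω → ℝ) → ℝ) (X₀ : Ω → ℝ) (Xs : (Ω → ℝ) → ℝ) : Prop :=
  IsLinearOp Xs ∧
  (∃ C : ℝ, ∀ X : Ω → ℝ, MemX X → |Xs X| ≤ C * ⨆ ω, |X ω|) ∧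
  ∀ X : Ω → ℝ, MemX X → Xs (X - X₀) ≤ f X - f X₀

namespace KKTAux

/-- Sublinear functional on a real vector space. -/
def Sub {V : Type*} [AddCommGroup V] [Module ℝ V] (p : V → ℝ) : Prop :=
  (∀ c : ℝ, 0 < c → ∀ x, p (c • x) = c * p x) ∧ ∀ x y, p (x + y) ≤ p x + p y

section abs
variable {V : Type*} [AddCommGroup V] [Module ℝ V]

lemma Sub.zero {p : V → ℝ} (hp : Sub p) : p 0 = 0 := by
  have := hp.1 2 (by norm_num) 0
  rw [smul_zero] at this
  linarith

lemma Sub.neg {p : V → ℝ} (hp : Sub p) (x : V) : 0 ≤ p x + p (-x) := by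
  have := hp.2 x (-x)
  rw [add_neg_cancel, hp.zero] at this
  exact this

lemma exists_single {p : V → ℝ} (hp : Sub p) (x₀ : V) :
    ∃ L : V →ₗ[ℝ] ℝ, (∀ x, L x ≤ p x) ∧ L x₀ = p x₀ := by
  by_cases h0 : x₀ = 0
  · obtain ⟨L, -, hL⟩ := exists_extension_of_le_sublinear (⟨⊥, 0⟩ : V →ₗ.[ℝ] ℝ) p hp.1 hp.2 (by
      rintro ⟨x, hx⟩
      have hx0 : x = 0 := by simpa using hx
      subst hx0
      change (0 : ℝ) ≤ p 0
      rw [hp.zero])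
    refine ⟨L, hL, ?_⟩
    rw [h0, map_zero, hp.zero]
  · obtain ⟨L, hL1, hL⟩ := exists_extension_of_le_sublinear
      (LinearPMap.mkSpanSingleton (K := ℝ) x₀ (p x₀) h0) p hp.1 hp.2 (by
      rintro ⟨x, hx⟩
      obtain ⟨c, rfl⟩ := Submodule.mem_span_singleton.1 hx
      rw [LinearPMap.mkSpanSingleton'_apply]
      change c * p x₀ ≤ p (c • x₀)
      rcases lt_trichotomy c 0 with h | h | h
      · have h1 := hp.1 (-c) (by linarith) x₀
        have h2 := hp.neg (c • x₀)
        rw [neg_smul] at h1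
        linarith
      · subst h; simp [hp.zero]
      · exact (hp.1 c h x₀).ge)
    refine ⟨L, hL, ?_⟩
    have := hL1 ⟨x₀, Submodule.mem_span_singleton_self x₀⟩
    rw [this]
    exact LinearPMap.mkSpanSingleton_apply ℝ ℝ h0 (p x₀)

lemma exists_split {ι : Type*} [Fintype ι] [DecidableEq ι] (q : ι → V → ℝ) (hq : ∀ i, Sub (q i))
    (h : ∀ x, 0 ≤ ∑ i, q i x) :
    ∃ L : ι → V →ₗ[ℝ] ℝ, (∀ i x, L i x ≤ q i x) ∧ ∀ x, ∑ i, L i x = 0 := by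
  let D : Submodule ℝ (ι → V) := LinearMap.range (LinearMap.pi fun _ : ι => LinearMap.id)
  obtain ⟨L, hL1, hL⟩ := exists_extension_of_le_sublinear (⟨D, 0⟩ : (ι → V) →ₗ.[ℝ] ℝ)
    (fun Y => ∑ i, q i (Y i))
    (by
      intro c hc x
      simp only [Pi.smul_apply, (hq _).1 c hc, Finset.mul_sum])
    (by
      intro x y
      rw [← Finset.sum_add_distrib]
      exact Finset.sum_le_sum fun i _ => (hq i).2 _ _)
    (by
      rintro ⟨x, y, rfl⟩
      exact h y)
  refine ⟨fun i => L ∘ₗ LinearMap.single ℝ (fun _ => V) i, ?_, ?_⟩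
  · intro i x
    refine (hL _).trans ?_
    rw [Finset.sum_eq_single i]
    · simp
    · intro j _ hj
      simp [hj, (hq j).zero]
    · simp
  · intro x
    have := hL1 ⟨fun _ => x, x, rfl⟩
    change L (fun _ => x) = 0 at this
    rw [← this]
    simp only [LinearMap.comp_apply, ← map_sum]
    congr 1
    ext j
    simp [Finset.sum_apply, Pi.single_apply]

lemma gordan {ι : Type*} [Fintype ι] [DecidableEq ι] (a : ι → ℝ) (p : ι → V → ℝ)
    (hp : ∀ i, Sub (p i)) (h : ∀ x, ∃ i, 0 ≤ a i + p i x) :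
    ∃ l : ι → ℝ, (∀ i, 0 ≤ l i) ∧ (∃ i, l i ≠ 0) ∧ ∀ x, 0 ≤ ∑ i, l i * (a i + p i x) := by
  let A : Set (ι → ℝ) := {r | ∃ x, ∀ i, a i + p i x < r i}
  have hconv : Convex ℝ A := by
    rw [convex_iff_forall_pos]
    rintro r ⟨x, hx⟩ s ⟨y, hy⟩ c d hc hd hcd
    refine ⟨c • x + d • y, fun i => ?_⟩
    have h1 := (hp i).2 (c • x) (d • y)
    rw [(hp i).1 c hc, (hp i).1 d hd] at h1
    have h2 := mul_lt_mul_of_pos_left (hx i) hc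
    have h3 := mul_lt_mul_of_pos_left (hy i) hd
    have h4 : a i = c * a i + d * a i := by rw [← add_mul, hcd, one_mul]
    simp only [Pi.add_apply, Pi.smul_apply, smul_eq_mul]
    linarith
  have hopen : IsOpen A := by
    have : A = ⋃ x, ⋂ i, {r : ι → ℝ | a i + p i x < r i} := by
      ext r; simp [A]
    rw [this]
    refine isOpen_iUnion fun x => isOpen_iInter_of_finite fun i => ?_
    exact isOpen_lt continuous_const (continuous_apply i)
  have h0 : (0 : ι → ℝ) ∉ A := by
    rintro ⟨x, hx⟩
    obtain ⟨i, hi⟩ := h x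
    have := hx i
    simp at this
    linarith
  obtain ⟨f, hf⟩ := geometric_hahn_banach_point_open hconv hopen h0
  rw [map_zero] at hf
  have hfr : ∀ r : ι → ℝ, f r = ∑ i, f (Pi.single i 1) * r i := by
    intro r
    conv_lhs => rw [pi_eq_sum_univ' r]
    rw [map_sum]
    refine Finset.sum_congr rfl fun i _ => ?_
    rw [map_smul, smul_eq_mul, mul_comm]
  let r₀ : ι → ℝ := fun i => a i + p i 0 + 1
  have hr₀ : r₀ ∈ A := ⟨0, fun i => by simp [r₀]⟩
  refine ⟨fun i => f (Pi.single i 1), ?_, ?_, ?_⟩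
  · intro i
    by_contra hneg
    push Not at hneg
    have hpos := hf r₀ hr₀
    set t : ℝ := f r₀ / (-f (Pi.single i 1)) with ht
    have htp : 0 < t := div_pos hpos (by linarith)
    have hmem : r₀ + t • Pi.single i (1:ℝ) ∈ A := by
      refine ⟨0, fun j => ?_⟩
      have : 0 ≤ t * (Pi.single i (1:ℝ) : ι → ℝ) j := by
        refine mul_nonneg htp.le ?_
        by_cases hj : j = i
        · subst hj; simp
        · simp [hj]
      simp only [Pi.add_apply, Pi.smul_apply, smul_eq_mul, r₀]
      linarith
    have := hf _ hmem
    rw [map_add, map_smul, smul_eq_mul] at this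
    have h5 : t * (-f (Pi.single i 1)) = f r₀ := by
      rw [ht]; exact div_mul_cancel₀ _ (by linarith)
    linarith
  · by_contra hall
    push Not at hall
    have := hf r₀ hr₀
    rw [hfr] at this
    simp [hall] at this
  · intro x
    by_contra hneg
    push Not at hneg
    have key : ∀ ε : ℝ, 0 < ε →
        0 < ∑ i, f (Pi.single i 1) * (a i + p i x) + ε * ∑ i, f (Pi.single i 1) := by
      intro ε hε
      have := hf (fun i => a i + p i x + ε) ⟨x, fun i => by linarith⟩
      rw [hfr] at this
      simp only [mul_add _ _ ε, Finset.sum_add_distrib] at this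
      rw [← Finset.sum_mul] at this
      linarith
    have hk1 := key 1 one_pos
    set S := ∑ i, f (Pi.single i 1) * (a i + p i x)
    set T := ∑ i, f (Pi.single i 1)
    have hT : 0 < T := by linarith
    have := key (-S / T) (div_pos (by linarith) hT)
    rw [div_mul_cancel₀ _ hT.ne'] at this
    linarith

/-- Abstract KKT necessity. Index `none` is the objective. -/
lemma kkt {ι : Type*} [Fintype ι] [DecidableEq ι] (p₀ : V → ℝ) (a : ι → ℝ) (p : ι → V → ℝ)
    (hp₀ : Sub p₀) (hp : ∀ i, Sub (p i)) (x₀ : V) (hx₀ : ∀ i, a i + p i x₀ ≤ 0)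
    (hopt : ∀ x, (∀ i, a i + p i x ≤ 0) → p₀ x₀ ≤ p₀ x)
    (s : V) (hs : ∀ i, a i + p i s < 0) :
    ∃ (l : ι → ℝ) (L₀ : V →ₗ[ℝ] ℝ) (L : ι → V →ₗ[ℝ] ℝ), (∀ i, 0 ≤ l i) ∧
      (∀ i, l i * (a i + p i x₀) = 0) ∧
      (∀ x, L₀ x ≤ p₀ x) ∧ L₀ x₀ = p₀ x₀ ∧
      (∀ i x, L i x ≤ p i x) ∧ (∀ i, L i x₀ = p i x₀) ∧
      ∀ x, L₀ x + ∑ i, l i * L i x = 0 := by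
  obtain ⟨k, hk0, ⟨j, hkj⟩, hk⟩ := gordan (fun o : Option ι => o.elim (-p₀ x₀) a)
    (fun o : Option ι => o.elim p₀ p) (by rintro (_ | i); exacts [hp₀, hp i]) (by
      intro x
      by_contra hcon
      push Not at hcon
      have h1 := hopt x (fun i => (hcon (some i)).le)
      have h2 : -p₀ x₀ + p₀ x < 0 := hcon none
      linarith)
  simp only [Fintype.sum_option, Option.elim] at hk
  have hkn : 0 < k none := by
    refine lt_of_le_of_ne (hk0 none) fun h => ?_
    have h1 := hk s
    rw [← h, zero_mul, zero_add] at h1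
    have h2 : ∀ i ∈ Finset.univ, k (some i) * (a i + p i s) ≤ 0 := fun i _ =>
      mul_nonpos_of_nonneg_of_nonpos (hk0 _) (hs i).le
    have h3 := (Finset.sum_eq_zero_iff_of_nonpos h2).1 (le_antisymm (Finset.sum_nonpos h2) h1)
    cases j with
    | none => exact hkj h.symm
    | some j =>
      rcases mul_eq_zero.1 (h3 j (Finset.mem_univ _)) with h4 | h4
      · exact hkj h4
      · exact (hs j).ne h4
  let l : ι → ℝ := fun i => k (some i) / k none
  have hl0 : ∀ i, 0 ≤ l i := fun i => div_nonneg (hk0 _) hkn.le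
  have hl : ∀ x, 0 ≤ (-p₀ x₀ + p₀ x) + ∑ i, l i * (a i + p i x) := by
    intro x
    have h1 := div_nonneg (hk x) hkn.le
    rw [add_div, mul_div_cancel_left₀ _ hkn.ne', Finset.sum_div] at h1
    have h3 : ∑ i, l i * (a i + p i x) = ∑ i, k (some i) * (a i + p i x) / k none :=
      Finset.sum_congr rfl fun i _ => by simp only [l]; ring
    rw [h3]; exact h1
  have h2 : ∀ i ∈ Finset.univ, l i * (a i + p i x₀) ≤ 0 := fun i _ =>
      mul_nonpos_of_nonneg_of_nonpos (hl0 _) (hx₀ i)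
  have hslack : ∀ i, l i * (a i + p i x₀) = 0 := by
    have h1 := hl x₀
    rw [neg_add_cancel, zero_add] at h1
    intro i
    exact (Finset.sum_eq_zero_iff_of_nonpos h2).1 (le_antisymm (Finset.sum_nonpos h2) h1) i
      (Finset.mem_univ _)
  -- the sublinear part is nonnegative
  have hnn : ∀ x, 0 ≤ p₀ x + ∑ i, l i * p i x := by
    intro x
    by_contra hneg
    push Not at hneg
    set B := -p₀ x₀ + ∑ i, l i * a i with hB
    have key : ∀ t : ℝ, 0 < t → 0 ≤ B + t * (p₀ x + ∑ i, l i * p i x) := by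
      intro t ht
      have h1 := hl (t • x)
      simp only [hp₀.1 t ht, (hp _).1 t ht, mul_add, Finset.sum_add_distrib] at h1
      have h3 : ∑ i, l i * (t * p i x) = t * ∑ i, l i * p i x := by
        rw [Finset.mul_sum]; exact Finset.sum_congr rfl fun i _ => by ring
      rw [h3] at h1
      linarith
    set Q := p₀ x + ∑ i, l i * p i x
    have h1 := key ((|B| + 1) / (-Q)) (div_pos (by positivity) (by linarith))
    have h3 : (|B| + 1) / (-Q) * Q = -(|B| + 1) := by
      rw [div_neg, neg_mul, div_mul_cancel₀ _ hneg.ne]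
    rw [h3] at h1
    linarith [le_abs_self B]
  have hle : p₀ x₀ + ∑ i, l i * p i x₀ ≤ 0 := by
    have h1 := hl 0
    rw [hp₀.zero] at h1
    simp only [(hp _).zero, add_zero] at h1
    have h3 : ∑ i, l i * p i x₀ = - ∑ i, l i * a i := by
      rw [← Finset.sum_neg_distrib]
      exact Finset.sum_congr rfl fun i _ => by linarith [hslack i]
    linarith
  obtain ⟨M, hM, hM0⟩ := exists_split
    (fun o : Option ι => o.elim p₀ (fun i x => l i * p i x)) (by
      rintro (_ | i)
      · exact hp₀
      · refine ⟨fun c hc x => ?_, fun x y => ?_⟩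
        · simp only [Option.elim, (hp i).1 c hc]; ring
        · simp only [Option.elim, ← mul_add]
          exact mul_le_mul_of_nonneg_left ((hp i).2 x y) (hl0 i)) (by
      intro x
      simp only [Fintype.sum_option, Option.elim]
      exact hnn x)
  have hMeq : ∀ o : Option ι, M o x₀ = o.elim p₀ (fun i x => l i * p i x) x₀ := by
    have h1 : ∑ o, M o x₀ = ∑ o : Option ι, o.elim p₀ (fun i x => l i * p i x) x₀ := by
      refine le_antisymm (Finset.sum_le_sum fun o _ => hM o x₀) ?_
      rw [hM0]
      simpa only [Fintype.sum_option, Option.elim] using hle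
    intro o
    exact (Finset.sum_eq_sum_iff_of_le (fun o _ => hM o x₀)).1 h1 o (Finset.mem_univ _)
  have hLi : ∀ i, ∃ L : V →ₗ[ℝ] ℝ, (∀ x, L x ≤ p i x) ∧ L x₀ = p i x₀ ∧
      ∀ x, l i * L x = M (some i) x := by
    intro i
    rcases (hl0 i).eq_or_lt with h | h
    · obtain ⟨L, h1, h3⟩ := exists_single (hp i) x₀
      refine ⟨L, h1, h3, fun x => ?_⟩
      have h4 := hM (some i) x
      have h5 := hM (some i) (-x)
      simp only [Option.elim, ← h, zero_mul, map_neg] at h4 h5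
      rw [← h, zero_mul]
      linarith
    · refine ⟨(l i)⁻¹ • M (some i), fun x => ?_, ?_, fun x => ?_⟩
      · have h4 := hM (some i) x
        simp only [Option.elim] at h4
        rw [LinearMap.smul_apply, smul_eq_mul, inv_mul_le_iff₀ h]
        exact h4
      · have h4 := hMeq (some i)
        simp only [Option.elim] at h4
        rw [LinearMap.smul_apply, smul_eq_mul, h4, inv_mul_cancel_left₀ h.ne']
      · rw [LinearMap.smul_apply, smul_eq_mul, mul_inv_cancel_left₀ h.ne']
  choose L hL1 hL2 hL3 using hLi
  refine ⟨l, M none, L, hl0, hslack, hM none, hMeq none, hL1, hL2, fun x => ?_⟩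
  simp only [hL3]
  have := hM0 x
  rwa [Fintype.sum_option] at this

end abs

section conc
variable {Ω : Type*} [MeasurableSpace Ω]

lemma memX_add {X Y : Ω → ℝ} (hX : MemX X) (hY : MemX Y) : MemX (X + Y) := by
  obtain ⟨hX, M, hM⟩ := hX
  obtain ⟨hY, N, hN⟩ := hY
  exact ⟨hX.add hY, M + N, fun ω => (abs_add_le _ _).trans (add_le_add (hM ω) (hN ω))⟩

lemma memX_smul (c : ℝ) {X : Ω → ℝ} (hX : MemX X) : MemX (c • X) := by
  obtain ⟨hX, M, hM⟩ := hX
  refine ⟨hX.const_smul c, |c| * M, fun ω => ?_⟩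
  rw [Pi.smul_apply, smul_eq_mul, abs_mul]
  exact mul_le_mul_of_nonneg_left (hM ω) (abs_nonneg c)

lemma memX_const (c : ℝ) : MemX (fun _ : Ω => c) := ⟨measurable_const, |c|, fun _ => le_rfl⟩

lemma memX_neg {X : Ω → ℝ} (hX : MemX X) : MemX (-X) := by
  have := memX_smul (-1) hX
  simpa using this

lemma memX_sub {X Y : Ω → ℝ} (hX : MemX X) (hY : MemX Y) : MemX (X - Y) := by
  rw [sub_eq_add_neg]; exact memX_add hX (memX_neg hY)

lemma memX_bddAbove {X : Ω → ℝ} (hX : MemX X) : BddAbove (Set.range X) := by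
  obtain ⟨-, M, hM⟩ := hX
  exact ⟨M, by rintro _ ⟨ω, rfl⟩; exact (abs_le.1 (hM ω)).2⟩

lemma memX_bddBelow {X : Ω → ℝ} (hX : MemX X) : BddBelow (Set.range X) := by
  obtain ⟨-, M, hM⟩ := hX
  exact ⟨-M, by rintro _ ⟨ω, rfl⟩; exact (abs_le.1 (hM ω)).1⟩

lemma memX_bddAbs {X : Ω → ℝ} (hX : MemX X) : BddAbove (Set.range fun ω => |X ω|) := by
  obtain ⟨-, M, hM⟩ := hX
  exact ⟨M, by rintro _ ⟨ω, rfl⟩; exact hM ω⟩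

variable (Ω) in
/-- The space of bounded measurable functions. -/
def VX : Submodule ℝ (Ω → ℝ) where
  carrier := {X | MemX X}
  add_mem' := memX_add
  zero_mem' := memX_const 0
  smul_mem' := fun c _ hX => memX_smul c hX

open Classical in
/-- Extension by zero of a functional on `VX`. -/
noncomputable def ext0 (L : VX Ω →ₗ[ℝ] ℝ) (X : Ω → ℝ) : ℝ :=
  if h : MemX X then L ⟨X, h⟩ else 0

lemma ext0_of (L : VX Ω →ₗ[ℝ] ℝ) {X : Ω → ℝ} (h : MemX X) : ext0 L X = L ⟨X, h⟩ := dif_pos h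

lemma subgrad (f : (Ω → ℝ) → ℝ) (p : VX Ω → ℝ) (a : ℝ)
    (hf : ∀ X (h : MemX X), f X = a + p ⟨X, h⟩)
    (hb : ∀ X : VX Ω, p X ≤ ⨆ ω, |X.1 ω|) (X₀ : VX Ω) (L : VX Ω →ₗ[ℝ] ℝ)
    (hL : ∀ x, L x ≤ p x) (hL0 : L X₀ = p X₀) : IsSubgradientAt f X₀.1 (ext0 L) := by
  refine ⟨⟨fun X Y hX hY => ?_, fun c X hX => ?_⟩, ⟨1, fun X hX => ?_⟩, fun X hX => ?_⟩
  · rw [ext0_of L hX, ext0_of L hY, ext0_of L (memX_add hX hY), ← map_add]; rfl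
  · rw [ext0_of L hX, ext0_of L (memX_smul c hX), ← smul_eq_mul, ← map_smul]; rfl
  · rw [ext0_of L hX, one_mul, abs_le]
    have h1 := (hL ⟨X, hX⟩).trans (hb _)
    have h2 := (hL (-⟨X, hX⟩)).trans (hb _)
    have h3 : (⨆ ω, |(-(⟨X, hX⟩ : VX Ω)).1 ω|) = ⨆ ω, |X ω| := by
      congr 1; ext ω
      change |(-X ω)| = _
      rw [abs_neg]
    rw [h3, map_neg] at h2
    exact ⟨by linarith, h1⟩
  · have h4 : ext0 L (X - X₀.1) = L ⟨X, hX⟩ - L X₀ := by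
      rw [ext0_of L (memX_sub hX X₀.2), ← map_sub]; rfl
    rw [h4, hf X hX, hf X₀.1 X₀.2, hL0]
    have := hL ⟨X, hX⟩
    change _ ≤ a + p ⟨X, hX⟩ - (a + p X₀)
    linarith

lemma op_sub {ρ : (Ω → ℝ) → ℝ} (h : IsSublinearOp ρ) : Sub (fun X : VX Ω => ρ X.1) :=
  ⟨fun c hc x => h.2.2.2 c hc.le x.1 x.2, fun x y => h.2.2.1 x.1 y.1 x.2 y.2⟩

lemma op_neg_sub {ρ : (Ω → ℝ) → ℝ} (h : IsSublinearOp ρ) : Sub (fun X : VX Ω => ρ (-X.1)) :=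
  ⟨fun c hc x => (op_sub h).1 c hc (-x) |> fun h => by
      rw [smul_neg] at h; exact h,
   fun x y => (op_sub h).2 (-x) (-y) |> fun h => by
      rw [← neg_add] at h; exact h⟩

lemma op_le_sup [Nonempty Ω] {ρ : (Ω → ℝ) → ℝ} (h : IsSublinearOp ρ) {X : Ω → ℝ} (hX : MemX X) :
    ρ X ≤ ⨆ ω, |X ω| := by
  rw [← h.2.1 (⨆ ω, |X ω|)]
  exact h.1 _ _ (memX_const _) hX fun ω => (le_abs_self _).trans (le_ciSup (memX_bddAbs hX) ω)

lemma sup_op [Nonempty Ω] : IsSublinearOp (fun X : Ω → ℝ => ⨆ ω, X ω) := by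
  refine ⟨fun X Y hX hY h => ciSup_mono (memX_bddAbove hX) h, fun c => ciSup_const,
    fun X Y hX hY => ciSup_le fun ω => add_le_add (le_ciSup (memX_bddAbove hX) ω)
      (le_ciSup (memX_bddAbove hY) ω), fun c hc X hX => ?_⟩
  simp only [Pi.smul_apply, smul_eq_mul]
  exact (Real.mul_iSup_of_nonneg hc _).symm

lemma neg_iInf (X : Ω → ℝ) : -(⨅ ω, X ω) = ⨆ ω, (-X) ω := by
  have : (fun ω => (-X) ω) = fun ω => (-1 : ℝ) * X ω := by ext; simp
  rw [this, ← Real.mul_iInf_of_nonpos (by norm_num)]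
  simp

end conc
end KKTAux

open KKTAux in
theorem optimal_iff_KKT {Ω : Type*} [MeasurableSpace Ω] [Nonempty Ω]
    (Emu Eups : (Ω → ℝ) → ℝ)
    (hEmu : IsSublinearOp Emu) (hEups : IsSublinearOp Eups)
    (α : ℝ) (hα0 : 0 < α) (hα1 : α < 1)
    (Xbar : Ω → ℝ)
    (Xbara : Set (Ω → ℝ))
    (hXbara : Xbara =
      {X : Ω → ℝ | MemX X ∧ (∀ ω, 0 ≤ X ω ∧ X ω ≤ 1) ∧ 1 - α ≤ conjOp Emu X})
    (g₁ g₂ g₃ : (Ω → ℝ) → ℝ)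
    (hg₁ : g₁ = fun X => 1 - α - conjOp Emu X)
    (hg₂ : g₂ = fun X => (⨆ ω, X ω) - 1)
    (hg₃ : g₃ = fun X => -(⨅ ω, X ω)) :
    (Xbar ∈ Xbara ∧ Eups Xbar = sInf (Eups '' Xbara)) ↔
    (Xbar ∈ Xbara ∧ ∃ l₁ l₂ l₃ : ℝ, 0 ≤ l₁ ∧ 0 ≤ l₂ ∧ 0 ≤ l₃ ∧
      l₁ * g₁ Xbar = 0 ∧ l₂ * g₂ Xbar = 0 ∧ l₃ * g₃ Xbar = 0 ∧
      ∃ x₀ x₁ x₂ x₃ : (Ω → ℝ) → ℝ,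
        IsSubgradientAt Eups Xbar x₀ ∧ IsSubgradientAt g₁ Xbar x₁ ∧
        IsSubgradientAt g₂ Xbar x₂ ∧ IsSubgradientAt g₃ Xbar x₃ ∧
        ∀ X : Ω → ℝ, MemX X →
          x₀ X + l₁ * x₁ X + l₂ * x₂ X + l₃ * x₃ X = 0) := by
  have hG1 : ∀ X, g₁ X = (1 - α) + Emu (-X) := fun X => by
    rw [hg₁]; simp [conjOp]
  have hG2 : ∀ X, g₂ X = -1 + ⨆ ω, X ω := fun X => by rw [hg₂]; ring
  have hG3 : ∀ X, g₃ X = 0 + ⨆ ω, (-X) ω := fun X => by rw [hg₃, zero_add]; exact neg_iInf X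
  have hfeas : ∀ X, MemX X → (X ∈ Xbara ↔ g₁ X ≤ 0 ∧ g₂ X ≤ 0 ∧ g₃ X ≤ 0) := by
    intro X hX
    rw [hG1, hG2, hG3, hXbara]
    have e1 : (-1 + ⨆ ω, X ω) ≤ 0 ↔ ∀ ω, X ω ≤ 1 := by
      rw [neg_add_nonpos_iff, ciSup_le_iff (memX_bddAbove hX)]
    have e2 : (0 + ⨆ ω, (-X) ω) ≤ 0 ↔ ∀ ω, 0 ≤ X ω := by
      rw [zero_add, ciSup_le_iff (memX_bddAbove (memX_neg hX))]
      simp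
    rw [e1, e2]
    simp only [Set.mem_setOf_eq, conjOp]
    constructor
    · rintro ⟨-, h1, h2⟩
      exact ⟨by linarith, fun ω => (h1 ω).2, fun ω => (h1 ω).1⟩
    · rintro ⟨h1, h2, h3⟩
      exact ⟨hX, fun ω => ⟨h3 ω, h2 ω⟩, by linarith⟩
  have hmem : ∀ X ∈ Xbara, MemX X := fun X hX => by rw [hXbara] at hX; exact hX.1
  refine and_congr_right fun hXb => ?_
  have hXm := hmem _ hXb
  have hopt : Eups Xbar = sInf (Eups '' Xbara) ↔ ∀ X ∈ Xbara, Eups Xbar ≤ Eups X := by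
    constructor
    · intro h X hX
      rw [h]
      refine csInf_le ⟨0, ?_⟩ ⟨X, hX, rfl⟩
      rintro _ ⟨Y, hY, rfl⟩
      rw [← hEups.2.1 0]
      refine hEups.1 _ _ (hmem Y hY) (memX_const 0) fun ω => ?_
      rw [hXbara] at hY
      exact (hY.2.1 ω).1
    · intro h
      have hleast : IsLeast (Eups '' Xbara) (Eups Xbar) := by
        refine ⟨⟨Xbar, hXb, rfl⟩, ?_⟩
        rintro _ ⟨Y, hY, rfl⟩
        exact h Y hY
      exact hleast.csInf_eq.symm
  rw [hopt]
  constructor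
  · intro hO
    have hfb := (hfeas Xbar hXm).1 hXb
    let X₀ : VX Ω := ⟨Xbar, hXm⟩
    let a : Fin 3 → ℝ := ![1 - α, -1, 0]
    let p : Fin 3 → VX Ω → ℝ := ![fun X => Emu (-X.1), fun X => ⨆ ω, X.1 ω,
      fun X => ⨆ ω, (-X.1) ω]
    have hb0 : ∀ X : VX Ω, Emu (-X.1) ≤ ⨆ ω, |X.1 ω| := fun X => by
      simpa using op_le_sup hEmu (memX_neg X.2)
    have hb2 : ∀ X : VX Ω, (⨆ ω, (-X.1) ω) ≤ ⨆ ω, |X.1 ω| := fun X => by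
      simpa using op_le_sup sup_op (memX_neg X.2)
    obtain ⟨l, L₀, L, hl, hsl, h0, h0e, hL, hLe, hsum⟩ := kkt (fun X : VX Ω => Eups X.1) a p
      (op_sub hEups)
      (by
        intro i
        fin_cases i
        exacts [op_neg_sub hEmu, op_sub sup_op, op_neg_sub sup_op])
      X₀
      (by
        rw [hG1, hG2, hG3] at hfb
        intro i
        fin_cases i
        exacts [hfb.1, hfb.2.1, hfb.2.2])
      (by
        intro X hX
        refine hO X.1 ((hfeas X.1 X.2).2 ?_)
        rw [hG1, hG2, hG3]
        exact ⟨hX 0, hX 1, hX 2⟩)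
      ⟨fun _ => 1 - α / 2, memX_const _⟩
      (by
        intro i
        fin_cases i
        · change 1 - α + Emu (fun _ => -(1 - α / 2)) < 0
          rw [hEmu.2.1]; linarith
        · change -1 + (⨆ _ : Ω, (1 - α / 2)) < 0
          rw [ciSup_const]; linarith
        · change 0 + (⨆ _ : Ω, -(1 - α / 2)) < 0
          rw [ciSup_const]; linarith)
    refine ⟨l 0, l 1, l 2, hl 0, hl 1, hl 2, ?_, ?_, ?_, ext0 L₀, ext0 (L 0), ext0 (L 1),
      ext0 (L 2), ?_, ?_, ?_, ?_, ?_⟩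
    · rw [hG1]; exact hsl 0
    · rw [hG2]; exact hsl 1
    · rw [hG3]; exact hsl 2
    · exact subgrad Eups (fun X => Eups X.1) 0 (fun X _ => (zero_add _).symm)
        (fun X => op_le_sup hEups X.2) X₀ L₀ h0 h0e
    · exact subgrad g₁ (p 0) (a 0) (fun X _ => hG1 X) hb0 X₀ (L 0) (hL 0) (hLe 0)
    · exact subgrad g₂ (p 1) (a 1) (fun X _ => hG2 X) (fun X => op_le_sup sup_op X.2)
        X₀ (L 1) (hL 1) (hLe 1)
    · exact subgrad g₃ (p 2) (a 2) (fun X _ => hG3 X) hb2 X₀ (L 2) (hL 2) (hLe 2)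
    · intro X hX
      have := hsum ⟨X, hX⟩
      rw [Fin.sum_univ_three] at this
      simp only [ext0_of _ hX]
      linarith
  · rintro ⟨l₁, l₂, l₃, hl₁, hl₂, hl₃, hs₁, hs₂, hs₃, x₀, x₁, x₂, x₃, h0, h1, h2, h3, hsum⟩ X hX
    have hXX := hmem X hX
    obtain ⟨f1, f2, f3⟩ := (hfeas X hXX).1 hX
    have e := hsum (X - Xbar) (memX_sub hXX hXm)
    have e0 := h0.2.2 X hXX
    have e1 := mul_le_mul_of_nonneg_left (h1.2.2 X hXX) hl₁
    have e2 := mul_le_mul_of_nonneg_left (h2.2.2 X hXX) hl₂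
    have e3 := mul_le_mul_of_nonneg_left (h3.2.2 X hXX) hl₃
    have k1 := mul_nonpos_of_nonneg_of_nonpos hl₁ f1
    have k2 := mul_nonpos_of_nonneg_of_nonpos hl₂ f2
    have k3 := mul_nonpos_of_nonneg_of_nonpos hl₃ f3
    rw [mul_sub] at e1 e2 e3
    linarith
end
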